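/- arXiv:1809.02328 — 6 statements merged into one kernel-verified Lean document; each statement's English description precedes it below -/
import Mathlib

section
/- Let ω be a real antisymmetric 4×4 matrix with ⋆ω = ±ω, let θ∓ be as defined (so that ωθ∓ = θ∓ω), and assume det(E₄ − ωθ∓) ≠ 0. Then the matrix g := 2(E₄ − ωθ∓)⁻¹ − E₄ is symmetric, and if moreover θ ≠ 0 (so θ∓ is invertible) and g + E₄ is invertible, then ω = (g − E₄)(g + E₄)⁻¹(θ∓)⁻¹. -/
open Matrix

namespace Paper

/-- The Levi-Civita symbol on four indices, as the product of signs of differences. -/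
def leviCivita (k l m n : Fin 4) : ℝ :=
  ((Int.sign ((l : ℤ) - (k : ℤ)) * Int.sign ((m : ℤ) - (k : ℤ)) *
    Int.sign ((n : ℤ) - (k : ℤ)) * Int.sign ((m : ℤ) - (l : ℤ)) *
    Int.sign ((n : ℤ) - (l : ℤ)) * Int.sign ((n : ℤ) - (m : ℤ)) : ℤ) : ℝ)

/-- The Hodge star operator on 4×4 real matrices:
`(⋆ω)_{kl} = (1/2) ∑_{m,n} ε_{klmn} ω_{mn}`. -/
noncomputable def hodgeStar (ω : Matrix (Fin 4) (Fin 4) ℝ) : Matrix (Fin 4) (Fin 4) ℝ :=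
  Matrix.of fun k l => (1 / 2 : ℝ) * ∑ m : Fin 4, ∑ n : Fin 4, leviCivita k l m n * ω m n

/-- The self-dual matrix `θ⁺`. -/
def thetaPlus (θ : ℝ) : Matrix (Fin 4) (Fin 4) ℝ :=
  !![0, -θ, 0, 0; θ, 0, 0, 0; 0, 0, 0, -θ; 0, 0, θ, 0]

/-- The anti-self-dual matrix `θ⁻`. -/
def thetaMinus (θ : ℝ) : Matrix (Fin 4) (Fin 4) ℝ :=
  !![0, -θ, 0, 0; θ, 0, 0, 0; 0, 0, 0, θ; 0, 0, -θ, 0]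


theorem comm_aux (θ : ℝ) (ω T : Matrix (Fin 4) (Fin 4) ℝ)
    (hanti : ωᵀ = -ω)
    (hsd : (hodgeStar ω = ω ∧ T = thetaMinus θ) ∨ (hodgeStar ω = -ω ∧ T = thetaPlus θ)) :
    T * ω = ω * T := by
  have ha : ∀ i j, ω j i = - ω i j := fun i j => by
    simpa using congrFun (congrFun hanti i) j
  have d0 : ω 0 0 = 0 := by linarith [ha 0 0]
  have d1 : ω 1 1 = 0 := by linarith [ha 1 1]
  have d2 : ω 2 2 = 0 := by linarith [ha 2 2]
  have d3 : ω 3 3 = 0 := by linarith [ha 3 3]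
  have a1 := ha 0 1
  have a2 := ha 0 2
  have a3 := ha 0 3
  have a4 := ha 1 2
  have a5 := ha 1 3
  have a6 := ha 2 3
  have s1 : hodgeStar ω 0 1 = ω 2 3 := by
    simp [hodgeStar, leviCivita, Fin.sum_univ_four]
    have e2 : Int.sign (((2 : Fin 4) : ℕ) : ℤ) = 1 := by decide
    have e3 : Int.sign (((3 : Fin 4) : ℕ) : ℤ) = 1 := by decide
    have e2' : Int.sign 2 = 1 := by decide
    have e3' : Int.sign 3 = 1 := by decide
    simp [e2, e3, e2', e3']
    linarith
  have s2 : hodgeStar ω 0 2 = - ω 1 3 := by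
    simp [hodgeStar, leviCivita, Fin.sum_univ_four]
    have e2 : Int.sign (((2 : Fin 4) : ℕ) : ℤ) = 1 := by decide
    have e3 : Int.sign (((3 : Fin 4) : ℕ) : ℤ) = 1 := by decide
    have e2' : Int.sign 2 = 1 := by decide
    have e3' : Int.sign 3 = 1 := by decide
    simp [e2, e3, e2', e3']
    linarith
  have s3 : hodgeStar ω 0 3 = ω 1 2 := by
    simp [hodgeStar, leviCivita, Fin.sum_univ_four]
    have e2 : Int.sign (((2 : Fin 4) : ℕ) : ℤ) = 1 := by decide
    have e3 : Int.sign (((3 : Fin 4) : ℕ) : ℤ) = 1 := by decide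
    have e2' : Int.sign 2 = 1 := by decide
    have e3' : Int.sign 3 = 1 := by decide
    simp [e2, e3, e2', e3']
    linarith
  rcases hsd with ⟨h, rfl⟩ | ⟨h, rfl⟩
  · rw [h] at s1 s2 s3
    ext i j
    fin_cases i <;> fin_cases j <;>
      simp [thetaMinus, Matrix.mul_apply, Fin.sum_univ_four, a1, a2, a3, a4, a5, a6,
        d0, d1, d2, d3, s1, s2, s3] <;> ring
  · rw [h] at s1 s2 s3
    simp only [Matrix.neg_apply] at s1 s2 s3
    have t1 : ω 2 3 = - ω 0 1 := by linarith
    have t2 : ω 1 3 = ω 0 2 := by linarith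
    have t3 : ω 1 2 = - ω 0 3 := by linarith
    ext i j
    fin_cases i <;> fin_cases j <;>
      simp [thetaPlus, Matrix.mul_apply, Fin.sum_univ_four, a1, a2, a3, a4, a5, a6,
        d0, d1, d2, d3, t1, t2, t3] <;> ring

theorem theta_aux (θ : ℝ) (T : Matrix (Fin 4) (Fin 4) ℝ)
    (h : T = thetaMinus θ ∨ T = thetaPlus θ) :
    Tᵀ = -T ∧ T * T = (-(θ ^ 2)) • (1 : Matrix (Fin 4) (Fin 4) ℝ) := by
  rcases h with rfl | rfl <;> constructor <;> ext i j <;> fin_cases i <;> fin_cases j <;>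
    simp [thetaPlus, thetaMinus, Matrix.mul_apply, Fin.sum_univ_four] <;> ring

/-- For an (anti-)self-dual antisymmetric `ω` with `det (E₄ - ω θ∓) ≠ 0`, the matrix
`g = 2(E₄ - ω θ∓)⁻¹ - E₄` is symmetric, and if `θ ≠ 0` and `g + E₄` is invertible then
`ω = (g - E₄)(g + E₄)⁻¹ (θ∓)⁻¹`. -/
theorem g_symm_and_inversion (θ : ℝ) (ω T : Matrix (Fin 4) (Fin 4) ℝ)
    (hanti : ωᵀ = -ω)
    (hsd : (hodgeStar ω = ω ∧ T = thetaMinus θ) ∨ (hodgeStar ω = -ω ∧ T = thetaPlus θ))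
    (hdet : (1 - ω * T).det ≠ 0) :
    (2 * (1 - ω * T)⁻¹ - 1)ᵀ = 2 * (1 - ω * T)⁻¹ - 1 ∧
    (θ ≠ 0 → IsUnit ((2 * (1 - ω * T)⁻¹ - 1) + 1) →
      ω = ((2 * (1 - ω * T)⁻¹ - 1) - 1) * ((2 * (1 - ω * T)⁻¹ - 1) + 1)⁻¹ * T⁻¹) := by
  have hc := comm_aux θ ω T hanti hsd
  obtain ⟨hT, hTT⟩ := theta_aux θ T (hsd.imp And.right And.right)
  have hA : (1 - ω * T)ᵀ = 1 - ω * T := by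
    rw [transpose_sub, transpose_mul, hanti, hT, transpose_one, neg_mul_neg, hc]
  have hu : IsUnit (1 - ω * T).det := isUnit_iff_ne_zero.mpr hdet
  have e2 : (2 : Matrix (Fin 4) (Fin 4) ℝ) = (2 : ℝ) • 1 := by
    rw [← one_add_one_eq_two, ← one_add_one_eq_two, add_smul, one_smul]
  constructor
  · rw [e2, smul_mul_assoc, one_mul, transpose_sub, transpose_smul, transpose_nonsing_inv, hA,
      transpose_one]
  · intro hθ _
    have hTi : T * T⁻¹ = 1 := by
      apply mul_nonsing_inv
      have h1 : T * ((-(θ ^ 2))⁻¹ • T) = 1 := by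
        rw [mul_smul_comm, hTT, smul_smul, inv_mul_cancel₀ (by simpa using hθ), one_smul]
      exact isUnit_det_of_right_inverse h1
    have hi : ((2 * (1 - ω * T)⁻¹ - 1) + 1)⁻¹ = (2⁻¹ : ℝ) • (1 - ω * T) := by
      apply inv_eq_right_inv
      rw [sub_add_cancel, e2, smul_mul_assoc, one_mul, smul_mul_smul_comm,
        nonsing_inv_mul _ hu]
      norm_num
    have hk : ((2 * (1 - ω * T)⁻¹ - 1) - 1) = (2 : ℝ) • ((1 - ω * T)⁻¹ - 1) := by
      rw [e2, smul_mul_assoc, one_mul, smul_sub, sub_sub, two_smul ℝ (1 : Matrix (Fin 4) (Fin 4) ℝ)]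
    rw [hi, hk, smul_mul_smul_comm, sub_mul, nonsing_inv_mul _ hu, one_mul, sub_sub_cancel,
      mul_inv_cancel₀ (two_ne_zero), one_smul, mul_assoc, hTi, mul_one]

end Paper
end

section
/- Let ω be a real antisymmetric 4×4 matrix with ⋆ω = ±ω, let θ∓ be as defined, and assume det(E₄ − ωθ∓) ≠ 0. Then det(2(E₄ − ωθ∓)⁻¹ − E₄) = 1. -/
open Matrix

namespace Paper

theorem det_aux (X : Matrix (Fin 4) (Fin 4) ℝ) (h : (1 + X).det = (1 - X).det)
    (hdet : (1 - X).det ≠ 0) : (2 * (1 - X)⁻¹ - 1).det = 1 := by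
  have hu : IsUnit (1 - X).det := isUnit_iff_ne_zero.mpr hdet
  have e : (2 * (1 - X)⁻¹ - 1) * (1 - X) = 1 + X := by
    rw [sub_mul, mul_assoc, Matrix.nonsing_inv_mul _ hu, mul_one, one_mul, ← one_add_one_eq_two]
    abel
  have e2 := congrArg Matrix.det e
  rw [Matrix.det_mul, h] at e2
  exact mul_right_cancel₀ hdet (by rw [e2, one_mul])

theorem anti_entries (ω : Matrix (Fin 4) (Fin 4) ℝ) (hanti : ωᵀ = -ω) (i j : Fin 4) :
    ω j i = - ω i j := by
  have := congrFun (congrFun hanti i) j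
  simpa using this

theorem star_entries (ω : Matrix (Fin 4) (Fin 4) ℝ) (hanti : ωᵀ = -ω) :
    hodgeStar ω 0 1 = ω 2 3 ∧ hodgeStar ω 0 2 = - ω 1 3 ∧ hodgeStar ω 0 3 = ω 1 2 := by
  have h := anti_entries ω hanti
  have s1 : Int.sign 2 = 1 := rfl
  have s2 : Int.sign 3 = 1 := rfl
  have s3 : Int.sign (-2) = -1 := rfl
  have h1 := h 2 3
  have h2 := h 1 3
  have h3 := h 1 2
  refine ⟨?_, ?_, ?_⟩ <;>
    simp [hodgeStar, leviCivita, Fin.sum_univ_four, s1, s2, s3] <;> linarith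

theorem form (ω : Matrix (Fin 4) (Fin 4) ℝ) (hanti : ωᵀ = -ω) (s : ℝ)
    (hs : hodgeStar ω = s • ω) (hs2 : s * s = 1) :
    ∃ a b c : ℝ, ω = !![0, a, b, c; -a, 0, s * c, -(s * b); -b, -(s * c), 0, s * a;
      -c, s * b, -(s * a), 0] := by
  have h := anti_entries ω hanti
  obtain ⟨h1, h2, h3⟩ := star_entries ω hanti
  rw [hs] at h1 h2 h3
  simp only [Matrix.smul_apply, smul_eq_mul] at h1 h2 h3
  refine ⟨ω 0 1, ω 0 2, ω 0 3, ?_⟩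
  ext i j
  have hij := h i j
  have hji := h 0 1
  have h02 := h 0 2
  have h03 := h 0 3
  have h12 := h 1 2
  have h13 := h 1 3
  have h23 := h 2 3
  fin_cases i <;> fin_cases j <;> simp at hij ⊢ <;> linarith

/-- For an (anti-)self-dual antisymmetric `ω` with `det (E₄ - ω θ∓) ≠ 0`,
`det (2(E₄ - ω θ∓)⁻¹ - E₄) = 1`. -/
theorem det_g_eq_one (θ : ℝ) (ω T : Matrix (Fin 4) (Fin 4) ℝ)
    (hanti : ωᵀ = -ω)
    (hsd : (hodgeStar ω = ω ∧ T = thetaMinus θ) ∨ (hodgeStar ω = -ω ∧ T = thetaPlus θ))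
    (hdet : (1 - ω * T).det ≠ 0) :
    (2 * (1 - ω * T)⁻¹ - 1).det = 1 := by
  apply det_aux _ _ hdet
  rcases hsd with ⟨hs, rfl⟩ | ⟨hs, rfl⟩
  · obtain ⟨a, b, c, rfl⟩ := form ω hanti 1 (by simpa using hs) (by norm_num)
    simp [thetaMinus, Matrix.det_succ_row_zero, Fin.sum_univ_succ, Fin.succAbove, Matrix.mul_apply,
      Matrix.one_apply]
    ring
  · obtain ⟨a, b, c, rfl⟩ := form ω hanti (-1) (by simpa using hs) (by norm_num)
    simp [thetaPlus, Matrix.det_succ_row_zero, Fin.sum_univ_succ, Fin.succAbove, Matrix.mul_apply,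
      Matrix.one_apply]
    ring

end Paper
end

section
/- For every 2×2 complex anti-Hermitian matrix ω_C, the determinant of its real 4×4 image satisfies det(ι_skew(ω_C)) = 16 (det ω_C)². -/
open Matrix

namespace Paper

/-- The map `ι_skew` from 2×2 complex anti-Hermitian matrices to real antisymmetric
4×4 matrices. -/
noncomputable def iotaSkew (w : Matrix (Fin 2) (Fin 2) ℂ) : Matrix (Fin 4) (Fin 4) ℝ :=
  !![0, (2 * Complex.I * w 0 0).re, (w 0 1 - w 1 0).re, (Complex.I * (w 0 1 + w 1 0)).re;
     -(2 * Complex.I * w 0 0).re, 0, (-(Complex.I * (w 0 1 + w 1 0))).re, (w 0 1 - w 1 0).re;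
     -(w 0 1 - w 1 0).re, (Complex.I * (w 0 1 + w 1 0)).re, 0, (2 * Complex.I * w 1 1).re;
     (-(Complex.I * (w 0 1 + w 1 0))).re, -(w 0 1 - w 1 0).re, -(2 * Complex.I * w 1 1).re, 0]

/-- For every 2×2 complex anti-Hermitian matrix `w`, `det (ι_skew w) = 16 (det w)²`. -/
theorem det_iotaSkew (w : Matrix (Fin 2) (Fin 2) ℂ) (hw : wᴴ = -w) :
    ((iotaSkew w).det : ℂ) = 16 * (w.det) ^ 2 := by
  have e := fun i j => congrFun (congrFun hw i) j
  have h00 := e 0 0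
  have h11 := e 1 1
  have h01 := e 0 1
  simp only [Matrix.conjTranspose_apply, Matrix.neg_apply, Complex.ext_iff, Complex.star_def,
    Complex.conj_re, Complex.conj_im, Complex.neg_re, Complex.neg_im] at h00 h11 h01
  have a0 : (w 0 0).re = 0 := by linarith [h00.1]
  have b0 : (w 1 1).re = 0 := by linarith [h11.1]
  have c0 : (w 1 0).re = -(w 0 1).re := h01.1
  have d0 : (w 1 0).im = (w 0 1).im := by linarith [h01.2]
  have hd : w.det = (((w 0 1).re ^ 2 + (w 0 1).im ^ 2 - (w 0 0).im * (w 1 1).im : ℝ) : ℂ) := by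
    rw [Matrix.det_fin_two]
    apply Complex.ext
    · simp only [Complex.sub_re, Complex.mul_re, Complex.ofReal_re, a0, b0, c0, d0]
      ring
    · simp only [Complex.sub_im, Complex.mul_im, Complex.ofReal_im, a0, b0, c0, d0]
      ring
  have hr : (iotaSkew w).det
      = 16 * ((w 0 1).re ^ 2 + (w 0 1).im ^ 2 - (w 0 0).im * (w 1 1).im) ^ 2 := by
    simp [iotaSkew, Matrix.det_succ_row_zero, Fin.sum_univ_succ, Fin.succAbove, c0, d0]
    ring
  rw [hd, hr]
  push_cast
  ring

end Paper
end

section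
/- Let U ⊆ ℝ⁴ ≅ ℂ² be an open set and ω : U → {real antisymmetric 4×4 matrices} a smooth map with ⋆ω(u) = ±ω(u) and det(E₄ − ω(u)θ∓) ≠ 0 for all u ∈ U, and let h : U → {2×2 complex Hermitian matrices} be the map determined pointwise by ι_sym(h(u)) = 2(E₄ − ω(u)θ∓)⁻¹ − E₄. Then det(h(u)) = 1 for every u ∈ U, and consequently the Ricci curvature of the Hermitian metric h vanishes: ∂_{z̄ⱼ}∂_{z_k} log det h = 0 on U for all j, k ∈ {1,2}, i.e. h is a Ricci-flat (Hermitian-Einstein) metric on U. -/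
open Matrix

namespace Paper

/-- The map `ι_sym` from 2×2 complex Hermitian matrices to real symmetric 4×4 matrices. -/
noncomputable def iotaSym (h : Matrix (Fin 2) (Fin 2) ℂ) : Matrix (Fin 4) (Fin 4) ℝ :=
  !![(h 0 0).re, 0, ((h 0 1 + h 1 0) / 2).re, ((h 1 0 - h 0 1) / (2 * Complex.I)).re;
     0, (h 0 0).re, (-((h 1 0 - h 0 1) / (2 * Complex.I))).re, ((h 0 1 + h 1 0) / 2).re;
     ((h 0 1 + h 1 0) / 2).re, (-((h 1 0 - h 0 1) / (2 * Complex.I))).re, (h 1 1).re, 0;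
     ((h 1 0 - h 0 1) / (2 * Complex.I)).re, ((h 0 1 + h 1 0) / 2).re, 0, (h 1 1).re]

/-- The partial derivative `∂_{x^μ}` of a function on `ℝ⁴` with complex values. -/
noncomputable def partialD (μ : Fin 4) (f : (Fin 4 → ℝ) → ℂ) (x : Fin 4 → ℝ) : ℂ :=
  fderiv ℝ f x (Pi.single μ 1)

/-- The Wirtinger derivative `∂_{z_k}` with respect to the complex coordinates
`z₁ = x² + i x¹`, `z₂ = x⁴ + i x³` on `ℝ⁴`. -/
noncomputable def delZ (k : Fin 2) (f : (Fin 4 → ℝ) → ℂ) (x : Fin 4 → ℝ) : ℂ :=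
  if k = 0 then (1 / 2 : ℂ) * (partialD 1 f x - Complex.I * partialD 0 f x)
  else (1 / 2 : ℂ) * (partialD 3 f x - Complex.I * partialD 2 f x)

/-- The Wirtinger derivative `∂_{z̄_k}`. -/
noncomputable def delZbar (k : Fin 2) (f : (Fin 4 → ℝ) → ℂ) (x : Fin 4 → ℝ) : ℂ :=
  if k = 0 then (1 / 2 : ℂ) * (partialD 1 f x + Complex.I * partialD 0 f x)
  else (1 / 2 : ℂ) * (partialD 3 f x + Complex.I * partialD 2 f x)

theorem aux_det (A : Matrix (Fin 4) (Fin 4) ℝ) (c : ℝ) (h : Matrix (Fin 2) (Fin 2) ℂ)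
    (hA : A * A = c • (1 : Matrix (Fin 4) (Fin 4) ℝ))
    (h2 : A 2 2 = - A 0 0)
    (hr : A 0 0 ^ 2 + A 0 2 ^ 2 + A 0 3 ^ 2 = c)
    (hdet : (1 - A).det ≠ 0) (hherm : hᴴ = h)
    (hmet : iotaSym h = 2 * (1 - A)⁻¹ - 1) : h.det = 1 := by
  have hu : IsUnit (1 - A).det := isUnit_iff_ne_zero.mpr hdet
  have hinv : (1 - A)⁻¹ * (1 - A) = 1 := Matrix.nonsing_inv_mul _ hu
  have e1 : iotaSym h * (1 - A) = 1 + A := by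
    rw [hmet, sub_mul, mul_assoc, hinv]; noncomm_ring
  have e2 : (1 - A) * (1 + A) = (1 - c) • (1 : Matrix (Fin 4) (Fin 4) ℝ) := by
    rw [sub_smul, one_smul, ← hA]; noncomm_ring
  have hs : 1 - c ≠ 0 := by
    intro hs
    rw [hs, zero_smul] at e2
    have e3 : 1 + A = 0 := by
      have := congrArg (fun X => (1 - A)⁻¹ * X) e2
      simpa [← mul_assoc, hinv] using this
    have a0 := congrFun (congrFun e3 0) 0
    have a2 := congrFun (congrFun e3 2) 2
    simp at a0 a2
    linarith
  have e4 : (1 - c) • iotaSym h = (1 + c) • (1 : Matrix (Fin 4) (Fin 4) ℝ) + (2 : ℝ) • A := by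
    have : iotaSym h * ((1 - A) * (1 + A)) = (1 + A) * (1 + A) := by
      rw [← mul_assoc, e1]
    rw [e2, mul_smul_comm, mul_one] at this
    rw [this, add_smul, one_smul, ← hA, two_smul]; noncomm_ring
  have f00 := congrFun (congrFun e4 0) 0
  have f22 := congrFun (congrFun e4 2) 2
  have f02 := congrFun (congrFun e4 0) 2
  have f03 := congrFun (congrFun e4 0) 3
  have g00 := congrFun (congrFun hherm 0) 0
  have g11 := congrFun (congrFun hherm 1) 1
  have g01 := congrFun (congrFun hherm 0) 1
  simp only [Matrix.conjTranspose_apply, RCLike.star_def, Complex.ext_iff, Complex.conj_re,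
    Complex.conj_im] at g00 g11 g01
  obtain ⟨g1, g2⟩ := g01
  have g00 := g00.2
  have g11 := g11.2
  simp [iotaSym, Complex.div_re, Complex.normSq] at f00 f22 f02 f03
  have i0 : (h 0 0).im = 0 := by linarith
  have i1 : (h 1 1).im = 0 := by linarith
  rw [g1] at f02
  rw [show (h 1 0).im = - (h 0 1).im by linarith] at f03
  have key : (1 - c) ^ 2 * ((h 0 0).re * (h 1 1).re - (h 0 1).re ^ 2 - (h 0 1).im ^ 2)
      = (1 - c) ^ 2 := by
    have p0 : (1 - c) * (h 0 0).re = 1 + c + 2 * A 0 0 := by linarith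
    have p1 : (1 - c) * (h 1 1).re = 1 + c - 2 * A 0 0 := by linarith
    have p2 : (1 - c) * (h 0 1).re = 2 * A 0 2 := by linarith
    have p3 : (1 - c) * (h 0 1).im = - (2 * A 0 3) := by linarith
    calc _ = ((1 - c) * (h 0 0).re) * ((1 - c) * (h 1 1).re) - ((1 - c) * (h 0 1).re) ^ 2
          - ((1 - c) * (h 0 1).im) ^ 2 := by ring
      _ = (1 + c) ^ 2 - 4 * (A 0 0 ^ 2 + A 0 2 ^ 2 + A 0 3 ^ 2) := by
          rw [p0, p1, p2, p3]; ring
      _ = _ := by rw [hr]; ring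
  have key2 := mul_left_cancel₀ (pow_ne_zero 2 hs) (key.trans (mul_one _).symm)
  have g1' : (h 1 0).re = (h 0 1).re := by linarith
  have g2' : (h 1 0).im = - (h 0 1).im := by linarith
  rw [Matrix.det_fin_two]
  apply Complex.ext
  · simp [i0, i1, g1', g2']; linarith
  · simp [i0, i1, g1', g2']; ring

theorem aux_form (w : Matrix (Fin 4) (Fin 4) ℝ) (s : ℝ) (hs : s ^ 2 = 1) (hanti : wᵀ = -w)
    (hsd : hodgeStar w = s • w) :
    w = !![0, w 0 1, w 0 2, w 0 3; -w 0 1, 0, s * w 0 3, -(s * w 0 2);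
      -w 0 2, -(s * w 0 3), 0, s * w 0 1; -w 0 3, s * w 0 2, -(s * w 0 1), 0] := by
  have an : ∀ i j, w j i = - w i j := fun i j => congrFun (congrFun hanti i) j
  have k01 := congrFun (congrFun hsd 0) 1
  have k02 := congrFun (congrFun hsd 0) 2
  have k03 := congrFun (congrFun hsd 0) 3
  have n00 := an 0 0
  have n11 := an 1 1
  have n22 := an 2 2
  have n33 := an 3 3
  have n01 := an 0 1
  have n02 := an 0 2
  have n03 := an 0 3
  have n12 := an 1 2
  have n13 := an 1 3
  have n23 := an 2 3
  have s2 : Int.sign 2 = 1 := rfl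
  have s3 : Int.sign 3 = 1 := rfl
  simp [hodgeStar, leviCivita, Fin.sum_univ_four, s2, s3] at k01 k02 k03
  ext i j
  fin_cases i <;> fin_cases j <;> simp <;> linarith

theorem aux_case (θ s : ℝ) (hs : s ^ 2 = 1) (w T : Matrix (Fin 4) (Fin 4) ℝ)
    (h : Matrix (Fin 2) (Fin 2) ℂ) (hanti : wᵀ = -w) (hsd : hodgeStar w = s • w)
    (hT : T = !![0, -θ, 0, 0; θ, 0, 0, 0; 0, 0, 0, s * θ; 0, 0, -(s * θ), 0])
    (hdet : (1 - w * T).det ≠ 0) (hherm : hᴴ = h)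
    (hmet : iotaSym h = 2 * (1 - w * T)⁻¹ - 1) : h.det = 1 := by
  have hw := aux_form w s hs hanti hsd
  generalize w 0 1 = a at hw
  generalize w 0 2 = b at hw
  generalize w 0 3 = e at hw
  refine aux_det (w * T) (θ ^ 2 * (a ^ 2 + b ^ 2 + e ^ 2)) h ?_ ?_ ?_ hdet hherm hmet
  · subst hw hT
    ext i j
    fin_cases i <;> fin_cases j <;> simp [Matrix.mul_apply, Fin.sum_univ_four] <;> grind
  · subst hw hT
    simp [Matrix.mul_apply, Fin.sum_univ_four]; grind
  · subst hw hT
    simp [Matrix.mul_apply, Fin.sum_univ_four]; grind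

/-- Hermitian-Einstein metrics from (anti-)self-dual two-forms: if `ω` is a smooth
(anti-)self-dual two-form on an open set `U ⊆ ℝ⁴` with `det (E₄ - ω θ∓) ≠ 0`, and `h` is
the Hermitian-matrix-valued map with `ι_sym (h u) = 2(E₄ - ω(u) θ∓)⁻¹ - E₄`, then
`det (h u) = 1` on `U` and the Ricci curvature `∂_{z̄ⱼ}∂_{z_k} log det h` vanishes on `U`,
i.e. `h` is a Ricci-flat (Hermitian-Einstein) metric on `U`. -/
theorem ricciFlat_of_selfDual (θ : ℝ) (T : Matrix (Fin 4) (Fin 4) ℝ)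
    (U : Set (Fin 4 → ℝ)) (hU : IsOpen U)
    (ω : (Fin 4 → ℝ) → Matrix (Fin 4) (Fin 4) ℝ)
    (h : (Fin 4 → ℝ) → Matrix (Fin 2) (Fin 2) ℂ)
    (hsmooth : ∀ i j : Fin 4, ContDiffOn ℝ (⊤ : ℕ∞) (fun u => ω u i j) U)
    (hanti : ∀ u ∈ U, (ω u)ᵀ = -(ω u))
    (hsd : ((∀ u ∈ U, hodgeStar (ω u) = ω u) ∧ T = thetaMinus θ) ∨
           ((∀ u ∈ U, hodgeStar (ω u) = -(ω u)) ∧ T = thetaPlus θ))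
    (hdet : ∀ u ∈ U, (1 - ω u * T).det ≠ 0)
    (hherm : ∀ u ∈ U, (h u)ᴴ = h u)
    (hmet : ∀ u ∈ U, iotaSym (h u) = 2 * (1 - ω u * T)⁻¹ - 1) :
    (∀ u ∈ U, (h u).det = 1) ∧
    (∀ j k : Fin 2, ∀ u ∈ U,
      delZbar j (fun y => delZ k (fun x => Complex.log ((h x).det)) y) u = 0) := by
  have main : ∀ u ∈ U, (h u).det = 1 := by
    intro u hu
    rcases hsd with ⟨hd, hT⟩ | ⟨hd, hT⟩
    · exact aux_case θ 1 (by norm_num) (ω u) T (h u) (hanti u hu) (by rw [hd u hu, one_smul])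
        (by rw [hT]; simp [thetaMinus]) (hdet u hu) (hherm u hu) (hmet u hu)
    · exact aux_case θ (-1) (by norm_num) (ω u) T (h u) (hanti u hu)
        (by rw [hd u hu, neg_smul, one_smul])
        (by rw [hT]; simp [thetaPlus]) (hdet u hu) (hherm u hu) (hmet u hu)
  refine ⟨main, ?_⟩
  have pz : ∀ (f : (Fin 4 → ℝ) → ℂ), (∀ u ∈ U, f u = 0) → ∀ μ, ∀ u ∈ U, partialD μ f u = 0 := by
    intro f hf μ u hu
    have : f =ᶠ[nhds u] fun _ => (0 : ℂ) := by
      filter_upwards [hU.mem_nhds hu] with y hy using hf y hy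
    simp [partialD, this.fderiv_eq]
  have l0 : ∀ u ∈ U, Complex.log ((h u).det) = 0 := by
    intro u hu
    rw [main u hu, Complex.log_one]
  intro j k u hu
  have l1 : ∀ y ∈ U, delZ k (fun x => Complex.log ((h x).det)) y = 0 := by
    intro y hy
    simp [delZ, pz _ l0 _ y hy]
  simp [delZbar, pz _ l1 _ u hu]

end Paper
end

section
/- Let F be a 2×2 complex traceless anti-Hermitian matrix with entries F₁₁, F₁₂, F₂₁ = −conj(F₁₂), F₂₂ = −F₁₁ (F₁₁ purely imaginary), and let θ be a real number with 4 (det F) θ² ≠ 1. Then ι_sym of the 2×2 Hermitian matrix (1/(4 (det F) θ² − 1)) · [[−4i F₁₁ θ − 2, −4i F₁₂ θ], [−4i F₂₁ θ, 4i F₁₁ θ − 2]] − E₂ equals 2(E₄ − ι_skew(F) θ⁺)⁻¹ − E₄. -/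
open Matrix

namespace Paper

/-- For a traceless anti-Hermitian `F` and real `θ` with `4 (det F) θ² ≠ 1`,
`ι_sym` of `(1/(4 (det F) θ² − 1)) · [[−4i F₁₁ θ − 2, −4i F₁₂ θ], [−4i F₂₁ θ, 4i F₁₁ θ − 2]] − E₂`
equals `2(E₄ − ι_skew(F) θ⁺)⁻¹ − E₄`. -/
theorem iotaSym_metric_formula (F : Matrix (Fin 2) (Fin 2) ℂ) (θ : ℝ)
    (hF : Fᴴ = -F) (htr : F 1 1 = -F 0 0)
    (hne : 4 * F.det * (θ : ℂ) ^ 2 ≠ 1) :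
    iotaSym ((4 * F.det * (θ : ℂ) ^ 2 - 1)⁻¹ •
        !![-4 * Complex.I * F 0 0 * (θ : ℂ) - 2, -4 * Complex.I * F 0 1 * (θ : ℂ);
           -4 * Complex.I * F 1 0 * (θ : ℂ), 4 * Complex.I * F 0 0 * (θ : ℂ) - 2] - 1)
      = 2 * (1 - iotaSkew F * thetaPlus θ)⁻¹ - 1 := by
  have h00 := congrFun (congrFun hF 0) 0
  have h01 := congrFun (congrFun hF 0) 1
  obtain ⟨a, b, c, e00, e01, e10⟩ : ∃ a b c : ℝ, F 0 0 = ⟨0, a⟩ ∧ F 0 1 = ⟨b, c⟩ ∧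
      F 1 0 = ⟨-b, c⟩ := by
    refine ⟨(F 0 0).im, (F 0 1).re, (F 0 1).im, ?_, ?_, ?_⟩
    · simp [Matrix.conjTranspose_apply, Complex.ext_iff] at h00
      apply Complex.ext
      · show (F 0 0).re = 0
        linarith
      · rfl
    · rfl
    · simp [Matrix.conjTranspose_apply, Complex.ext_iff] at h01
      apply Complex.ext
      · show (F 1 0).re = -(F 0 1).re
        linarith [h01.1]
      · show (F 1 0).im = (F 0 1).im
        linarith [h01.2]
  have hD : 4 * F.det * (θ : ℂ) ^ 2 - 1
      = ((4 * (a ^ 2 + b ^ 2 + c ^ 2) * θ ^ 2 - 1 : ℝ) : ℂ) := by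
    have hd : F.det = ((a ^ 2 + b ^ 2 + c ^ 2 : ℝ) : ℂ) := by
      rw [Matrix.det_fin_two, htr, e00, e01, e10]
      apply Complex.ext
      · simp only [Complex.sub_re, Complex.mul_re, Complex.neg_re, Complex.neg_im, Complex.ofReal_re]
        ring
      · simp only [Complex.sub_im, Complex.mul_im, Complex.neg_re, Complex.neg_im, Complex.ofReal_im]
        ring
    rw [hd]
    push_cast
    ring
  have hr : 4 * (a ^ 2 + b ^ 2 + c ^ 2) * θ ^ 2 - 1 ≠ 0 := by
    intro h
    apply hne
    rw [h] at hD
    exact sub_eq_zero.mp (by simpa using hD)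
  rw [hD]
  generalize hg : 4 * (a ^ 2 + b ^ 2 + c ^ 2) * θ ^ 2 - 1 = D at hr
  have hS : 1 - iotaSkew F * thetaPlus θ =
      !![1 + 2 * θ * a, 0, 2 * θ * c, 2 * θ * b;
         0, 1 + 2 * θ * a, -(2 * θ * b), 2 * θ * c;
         2 * θ * c, -(2 * θ * b), 1 - 2 * θ * a, 0;
         2 * θ * b, 2 * θ * c, 0, 1 - 2 * θ * a] := by
    unfold iotaSkew thetaPlus
    rw [htr, e00, e01, e10]
    ext i j
    fin_cases i <;> fin_cases j <;>
      simp [Matrix.mul_apply, Fin.sum_univ_four] <;> ring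
  have hinv : (1 - iotaSkew F * thetaPlus θ)⁻¹ = D⁻¹ •
      !![2 * θ * a - 1, 0, 2 * θ * c, 2 * θ * b;
         0, 2 * θ * a - 1, -(2 * θ * b), 2 * θ * c;
         2 * θ * c, -(2 * θ * b), -(2 * θ * a) - 1, 0;
         2 * θ * b, 2 * θ * c, 0, -(2 * θ * a) - 1] := by
    apply Matrix.inv_eq_right_inv
    rw [hS, Matrix.mul_smul, inv_smul_eq_iff₀ hr, ← hg]
    ext i j
    fin_cases i <;> fin_cases j <;>
      simp [Matrix.mul_apply, Fin.sum_univ_four] <;> ring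
  rw [hinv, ← Complex.ofReal_inv, e00, e01, e10, two_mul]
  unfold iotaSym
  ext i j
  fin_cases i <;> fin_cases j <;>
    simp [Complex.div_re, Complex.normSq] <;> ring

end Paper
end

section
/- Fix ζ > 0 and nonnegative integers k₁, k₂, l₁, l₂, m₁, m₂, n₁, n₂. Then the Karabegov star product series for e_{(k₁,k₂,l₁,l₂)} * e_{(m₁,m₂,n₁,n₂)} converges at every point of ℂ² and e_{(k₁,k₂,l₁,l₂)} * e_{(m₁,m₂,n₁,n₂)} = δ_{l₁ m₁} δ_{l₂ m₂} e_{(k₁,k₂,n₁,n₂)}. -/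
namespace Paper

/-- Directional derivative (over `ℝ`) of a function on `ℂ²` in the direction `v`. -/
noncomputable def pdC (v : Fin 2 → ℂ) (f : (Fin 2 → ℂ) → ℂ) (p : Fin 2 → ℂ) : ℂ :=
  fderiv ℝ f p v

/-- The Wirtinger derivative `∂_{z_k}` on `ℂ²`. -/
noncomputable def dZ (k : Fin 2) (f : (Fin 2 → ℂ) → ℂ) (p : Fin 2 → ℂ) : ℂ :=
  (1 / 2 : ℂ) * (pdC (Pi.single k 1) f p - Complex.I * pdC (Pi.single k Complex.I) f p)

/-- The Wirtinger derivative `∂_{z̄_k}` on `ℂ²`. -/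
noncomputable def dZbar (k : Fin 2) (f : (Fin 2 → ℂ) → ℂ) (p : Fin 2 → ℂ) : ℂ :=
  (1 / 2 : ℂ) * (pdC (Pi.single k 1) f p + Complex.I * pdC (Pi.single k Complex.I) f p)

/-- Iterated holomorphic Wirtinger derivatives `∂_{z_{k₁}} ⋯ ∂_{z_{kₙ}}`. -/
noncomputable def dZIter : (n : ℕ) → (Fin n → Fin 2) → ((Fin 2 → ℂ) → ℂ) → ((Fin 2 → ℂ) → ℂ)
  | 0, _, f => f
  | n + 1, ks, f => dZ (ks 0) (dZIter n (fun i => ks i.succ) f)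

/-- Iterated antiholomorphic Wirtinger derivatives `∂_{z̄_{k₁}} ⋯ ∂_{z̄_{kₙ}}`. -/
noncomputable def dZbarIter : (n : ℕ) → (Fin n → Fin 2) → ((Fin 2 → ℂ) → ℂ) → ((Fin 2 → ℂ) → ℂ)
  | 0, _, f => f
  | n + 1, ks, f => dZbar (ks 0) (dZbarIter n (fun i => ks i.succ) f)

/-- The `n`-th term of the Karabegov star-product series:
`(ζⁿ/n!) ∑_{k₁,…,kₙ ∈ {1,2}} (∂_{z̄_{k₁}}⋯∂_{z̄_{kₙ}} f)(∂_{z_{k₁}}⋯∂_{z_{kₙ}} g)`. -/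
noncomputable def starTerm (ζ : ℝ) (f g : (Fin 2 → ℂ) → ℂ) (n : ℕ) (p : Fin 2 → ℂ) : ℂ :=
  ((ζ : ℂ) ^ n / (n.factorial : ℂ)) *
    ∑ ks : Fin n → Fin 2, dZbarIter n ks f p * dZIter n ks g p

/-- The Karabegov star product with separation of variables on `ℂ²`,
`f * g = Σ_{n=0}^∞ (ζⁿ/n!) Σ_{k₁,…,kₙ} (∂_{z̄_{k₁}}⋯∂_{z̄_{kₙ}} f)(∂_{z_{k₁}}⋯∂_{z_{kₙ}} g)`. -/
noncomputable def starProd (ζ : ℝ) (f g : (Fin 2 → ℂ) → ℂ) (p : Fin 2 → ℂ) : ℂ :=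
  ∑' n : ℕ, starTerm ζ f g n p


/-- The twisted Fock basis function
`e_{(m₁,m₂,n₁,n₂)} = z₁^{m₁} z₂^{m₂} e^{−(z₁z̄₁+z₂z̄₂)/ζ} z̄₁^{n₁} z̄₂^{n₂}
  / (√(m₁!m₂!n₁!n₂!) (√ζ)^{m₁+m₂+n₁+n₂})`. -/
noncomputable def eFun (ζ : ℝ) (m₁ m₂ n₁ n₂ : ℕ) (p : Fin 2 → ℂ) : ℂ :=
  p 0 ^ m₁ * p 1 ^ m₂ *
    Complex.exp (-(p 0 * starRingEnd ℂ (p 0) + p 1 * starRingEnd ℂ (p 1)) / (ζ : ℂ)) *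
    starRingEnd ℂ (p 0) ^ n₁ * starRingEnd ℂ (p 1) ^ n₂ /
    ((Real.sqrt (m₁.factorial * m₂.factorial * n₁.factorial * n₂.factorial) : ℂ) *
      (Real.sqrt ζ : ℂ) ^ (m₁ + m₂ + n₁ + n₂))

/-! Helper material -/

/-- The polynomials with `∂^a (w^l e^{-cw}) = e^{-cw} PP c w a l`. -/
noncomputable def PP (c w : ℂ) : ℕ → ℕ → ℂ
  | 0, l => w ^ l
  | a + 1, l => l * PP c w a (l - 1) - c * PP c w a l

lemma PP_step (c w : ℂ) (a l : ℕ) :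
    PP c w (a + 1) l = l * PP c w a (l - 1) - c * PP c w a l := by rw [PP]

lemma PP_succ (c w : ℂ) (a l : ℕ) :
    PP c w (a + 1) (l + 1) = w * PP c w (a + 1) l + (a + 1) * PP c w a l := by
  induction a generalizing l with
  | zero =>
    cases l with
    | zero => simp [PP]; ring
    | succ l => simp [PP]; ring
  | succ a ih =>
    cases l with
    | zero =>
      have h0 := ih 0
      have h3 : PP c w (a + 1 + 1) 0 = - c * PP c w (a + 1) 0 := by rw [PP]; simp
      rw [PP_step c w (a + 1) (0 + 1), h3]
      simp only [Nat.add_sub_cancel] at *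
      rw [h0]
      have : PP c w (a + 1) 0 = - c * PP c w a 0 := by rw [PP]; simp
      push_cast
      simp only [this]
      ring
    | succ l =>
      have h0 := ih (l + 1)
      have h1 := ih l
      have h2 : PP c w (a + 1) (l + 1) = (l + 1 : ℕ) * PP c w a l - c * PP c w a (l + 1) := by
        rw [PP]; simp
      rw [PP_step c w (a + 1) (l + 1 + 1), PP_step c w (a + 1) (l + 1)]
      simp only [Nat.add_sub_cancel] at *
      rw [h0]
      push_cast at *
      linear_combination (l + 1 : ℂ) * h1 - (a + 1) * h2

lemma PP_zero (c w : ℂ) (a : ℕ) : PP c w a 0 = (-c) ^ a := by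
  induction a with
  | zero => simp [PP]
  | succ a ih => rw [PP]; simp [ih]; ring

noncomputable def TT (ζ : ℝ) (z w : ℂ) (l m a : ℕ) : ℂ :=
  (ζ : ℂ) ^ a / (a.factorial : ℂ) * (PP (z / ζ) w a l * PP (w / ζ) z a m)

lemma TT_step (ζ : ℝ) (hζ : 0 < ζ) (z w : ℂ) (l m : ℕ) (s s' : ℂ)
    (h : HasSum (TT ζ z w l m) s) (h' : HasSum (fun a => m * TT ζ z w l (m - 1) a) s') :
    HasSum (TT ζ z w (l + 1) m) (ζ * s') := by
  have hz : (ζ : ℂ) ≠ 0 := by exact_mod_cast hζ.ne'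
  -- U a = TT (l+1) m a - w * TT l m a
  have hU : HasSum (fun a => TT ζ z w (l + 1) m a - w * TT ζ z w l m a) (ζ * s' - w * s) := by
    rw [← hasSum_nat_add_iff' 1]
    have h0 : ∑ i ∈ Finset.range 1, (TT ζ z w (l + 1) m i - w * TT ζ z w l m i) = 0 := by
      simp [TT, PP]; ring
    rw [h0, sub_zero]
    convert ((h'.mul_left (ζ : ℂ)).sub (h.mul_left w)) using 1
    funext a
    have hf : ((a.factorial : ℕ) : ℂ) ≠ 0 := by exact_mod_cast a.factorial_ne_zero
    have ha : ((a : ℂ) + 1) ≠ 0 := by exact_mod_cast a.succ_ne_zero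
    simp only [TT]
    rw [PP_succ, PP_step (w / ζ) z a m, Nat.factorial_succ]
    push_cast
    field_simp
    ring
  have := hU.add (h.mul_left w)
  simpa using this

lemma TT_swap (ζ : ℝ) (z w : ℂ) (l m a : ℕ) : TT ζ z w l m a = TT ζ w z m l a := by
  simp only [TT]; ring

lemma TT_zero_zero (ζ : ℝ) (hζ : 0 < ζ) (z w : ℂ) :
    HasSum (TT ζ z w 0 0) (Complex.exp (z * w / ζ)) := by
  have hz : (ζ : ℂ) ≠ 0 := by exact_mod_cast hζ.ne'
  have := NormedSpace.expSeries_div_hasSum_exp (z * w / ζ : ℂ)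
  rw [← Complex.exp_eq_exp_ℂ] at this
  have e : TT ζ z w 0 0 = fun n : ℕ => (z * w / ζ : ℂ) ^ n / (n.factorial : ℂ) := ?_
  · rw [e]; exact this
  funext a
  simp only [TT, PP_zero]
  rw [← mul_pow, div_mul_eq_mul_div, ← mul_pow]
  congr 2
  field_simp

lemma TT_zero (ζ : ℝ) (hζ : 0 < ζ) (z w : ℂ) (m : ℕ) :
    HasSum (TT ζ z w 0 m) (if m = 0 then Complex.exp (z * w / ζ) else 0) := by
  induction m with
  | zero => simpa using TT_zero_zero ζ hζ z w
  | succ m ih =>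
    have e : ∀ m, TT ζ z w 0 m = TT ζ w z m 0 := fun m => funext fun a => TT_swap ..
    rw [e] at ih ⊢
    have := TT_step ζ hζ w z m 0 _ 0 ih (by simpa using hasSum_zero)
    simpa using this

lemma TT_hasSum (ζ : ℝ) (hζ : 0 < ζ) (z w : ℂ) (l m : ℕ) :
    HasSum (TT ζ z w l m)
      (if l = m then (l.factorial : ℂ) * ζ ^ l * Complex.exp (z * w / ζ) else 0) := by
  induction l generalizing m with
  | zero => simpa [eq_comm] using TT_zero ζ hζ z w m
  | succ l ih =>
    have := TT_step ζ hζ z w l m _ _ (ih m) ((ih (m - 1)).mul_left (m : ℂ))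
    convert this using 1
    cases m with
    | zero => simp
    | succ m =>
      by_cases h : l = m
      · subst h; simp [Nat.factorial_succ]; ring
      · simp [h]

/-- Unified Wirtinger derivative. -/
def HasD (s : ℂ) (k : Fin 2) (f : (Fin 2 → ℂ) → ℂ) (p : Fin 2 → ℂ) (d : ℂ) : Prop :=
  ∃ L : (Fin 2 → ℂ) →L[ℝ] ℂ, HasFDerivAt f L p ∧
    (1 / 2 : ℂ) * (L (Pi.single k 1) + s * (Complex.I * L (Pi.single k Complex.I))) = d

section
variable {s : ℂ} {k : Fin 2} {f g : (Fin 2 → ℂ) → ℂ} {p : Fin 2 → ℂ} {d e : ℂ}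

lemma HasD.congr_d (h : HasD s k f p d) (he : d = e) : HasD s k f p e := he ▸ h

lemma HasD.const (c : ℂ) : HasD s k (fun _ => c) p 0 :=
  ⟨0, hasFDerivAt_const c p, by simp⟩

lemma HasD.sub (hf : HasD s k f p d) (hg : HasD s k g p e) :
    HasD s k (fun q => f q - g q) p (d - e) := by
  obtain ⟨L, hL, rfl⟩ := hf
  obtain ⟨M, hM, rfl⟩ := hg
  exact ⟨_, hL.sub hM, by simp; ring⟩

lemma HasD.add (hf : HasD s k f p d) (hg : HasD s k g p e) :
    HasD s k (fun q => f q + g q) p (d + e) := by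
  obtain ⟨L, hL, rfl⟩ := hf
  obtain ⟨M, hM, rfl⟩ := hg
  exact ⟨_, hL.add hM, by simp; ring⟩

lemma HasD.mul (hf : HasD s k f p d) (hg : HasD s k g p e) :
    HasD s k (fun q => f q * g q) p (f p * e + d * g p) := by
  obtain ⟨L, hL, rfl⟩ := hf
  obtain ⟨M, hM, rfl⟩ := hg
  exact ⟨_, hL.mul hM, by simp; ring⟩

lemma HasD.cexp (hf : HasD s k f p d) :
    HasD s k (fun q => Complex.exp (f q)) p (Complex.exp (f p) * d) := by
  obtain ⟨L, hL, rfl⟩ := hf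
  exact ⟨_, hL.cexp, by simp; ring⟩

lemma HasD.pow (hf : HasD s k f p d) (n : ℕ) :
    HasD s k (fun q => f q ^ n) p (n * f p ^ (n - 1) * d) := by
  induction n with
  | zero => simpa using HasD.const (s := s) (k := k) (p := p) 1
  | succ n ih =>
    have := ih.mul hf
    simp only [← pow_succ] at this
    refine this.congr_d ?_
    cases n with
    | zero => simp
    | succ n => simp; ring

lemma HasD.dZ (h : HasD (-1) k f p d) : dZ k f p = d := by
  obtain ⟨L, hL, rfl⟩ := h
  simp only [Paper.dZ, pdC, hL.fderiv]; ring

lemma HasD.dZbar (h : HasD 1 k f p d) : dZbar k f p = d := by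
  obtain ⟨L, hL, rfl⟩ := h
  simp only [Paper.dZbar, pdC, hL.fderiv]; ring

lemma hasD_proj (s : ℂ) (k i : Fin 2) (p : Fin 2 → ℂ) :
    HasD s k (fun q => q i) p (if i = k then (1 - s) / 2 else 0) := by
  refine ⟨_, (ContinuousLinearMap.proj (R := ℝ) (φ := fun _ : Fin 2 => ℂ) i).hasFDerivAt, ?_⟩
  by_cases h : i = k
  · subst h; simp; ring
  · simp [h, Pi.single_apply]

lemma hasD_conj (s : ℂ) (k i : Fin 2) (p : Fin 2 → ℂ) :
    HasD s k (fun q => starRingEnd ℂ (q i)) p (if i = k then (1 + s) / 2 else 0) := by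
  refine ⟨_, ((Complex.conjCLE : ℂ →L[ℝ] ℂ).comp
    (ContinuousLinearMap.proj (R := ℝ) (φ := fun _ : Fin 2 => ℂ) i)).hasFDerivAt, ?_⟩
  by_cases h : i = k
  · subst h; simp; ring_nf; try simp
  · simp [h, Pi.single_apply]

lemma hasD_PP (hf : HasD s k f p 0) (hg : HasD s k g p d) (a l : ℕ) :
    HasD s k (fun q => PP (f q) (g q) a l) p (l * PP (f p) (g p) a (l - 1) * d) := by
  induction a generalizing l with
  | zero => simpa [PP] using hg.pow l
  | succ a ih =>
    simp only [PP]
    refine (((HasD.const (l : ℂ)).mul (ih (l - 1))).sub (hf.mul (ih l))).congr_d ?_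
    ring

end

/-- General shape of the iterated derivatives. -/
noncomputable def FF (ζ : ℝ) (x y : Fin 2 → (Fin 2 → ℂ) → ℂ) (C : ℂ) (k₁ k₂ l₁ l₂ a b : ℕ)
    (p : Fin 2 → ℂ) : ℂ :=
  (C * (y 0 p ^ k₁ * y 1 p ^ k₂)) *
    (Complex.exp ((-(ζ : ℂ)⁻¹) * (x 0 p * y 0 p + x 1 p * y 1 p)) *
    (PP (y 0 p * (ζ : ℂ)⁻¹) (x 0 p) a l₁ * PP (y 1 p * (ζ : ℂ)⁻¹) (x 1 p) b l₂))

lemma hasD_FF (s : ℂ) (ζ : ℝ) (x y : Fin 2 → (Fin 2 → ℂ) → ℂ) (C : ℂ)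
    (k₁ k₂ l₁ l₂ a b : ℕ) (k : Fin 2) (p : Fin 2 → ℂ)
    (hx : ∀ i, HasD s k (x i) p (if i = k then 1 else 0))
    (hy : ∀ i, HasD s k (y i) p 0) :
    HasD s k (FF ζ x y C k₁ k₂ l₁ l₂ a b) p
      (FF ζ x y C k₁ k₂ l₁ l₂ (a + if k = 0 then 1 else 0) (b + if k = 1 then 1 else 0) p) := by
  have hc : ∀ i, HasD s k (fun q => y i q * (ζ : ℂ)⁻¹) p 0 := fun i =>
    ((hy i).mul (HasD.const _)).congr_d (by simp)
  have h1 := (HasD.const C).mul (((hy 0).pow k₁).mul ((hy 1).pow k₂))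
  have h2 := ((HasD.const (-(ζ : ℂ)⁻¹)).mul
    (((hx 0).mul (hy 0)).add ((hx 1).mul (hy 1)))).cexp
  have h3 := (hasD_PP (hc 0) (hx 0) a l₁).mul (hasD_PP (hc 1) (hx 1) b l₂)
  refine (h1.mul (h2.mul h3)).congr_d ?_
  fin_cases k
  · simp [FF, PP, -mul_eq_mul_left_iff, -mul_eq_mul_right_iff]; ring
  · simp [FF, PP, -mul_eq_mul_left_iff, -mul_eq_mul_right_iff]; ring

def cnt (i : Fin 2) : (n : ℕ) → (Fin n → Fin 2) → ℕ
  | 0, _ => 0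
  | n + 1, ks => cnt i n (fun j => ks j.succ) + if ks 0 = i then 1 else 0

lemma dZbarIter_FF (ζ : ℝ) (C : ℂ) (k₁ k₂ l₁ l₂ n : ℕ) (ks : Fin n → Fin 2) :
    dZbarIter n ks (FF ζ (fun i q => starRingEnd ℂ (q i)) (fun i q => q i) C k₁ k₂ l₁ l₂ 0 0) =
      FF ζ (fun i q => starRingEnd ℂ (q i)) (fun i q => q i) C k₁ k₂ l₁ l₂
        (cnt 0 n ks) (cnt 1 n ks) := by
  induction n with
  | zero => rfl
  | succ n ih =>
    rw [dZbarIter, ih]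
    funext p
    refine (hasD_FF 1 ζ _ _ C k₁ k₂ l₁ l₂ _ _ (ks 0) p ?_ ?_).dZbar
    · intro i; exact (hasD_conj 1 (ks 0) i p).congr_d (by norm_num)
    · intro i; exact (hasD_proj 1 (ks 0) i p).congr_d (by norm_num)

lemma dZIter_FF (ζ : ℝ) (C : ℂ) (k₁ k₂ l₁ l₂ n : ℕ) (ks : Fin n → Fin 2) :
    dZIter n ks (FF ζ (fun i q => q i) (fun i q => starRingEnd ℂ (q i)) C k₁ k₂ l₁ l₂ 0 0) =
      FF ζ (fun i q => q i) (fun i q => starRingEnd ℂ (q i)) C k₁ k₂ l₁ l₂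
        (cnt 0 n ks) (cnt 1 n ks) := by
  induction n with
  | zero => rfl
  | succ n ih =>
    rw [dZIter, ih]
    funext p
    refine (hasD_FF (-1) ζ _ _ C k₁ k₂ l₁ l₂ _ _ (ks 0) p ?_ ?_).dZ
    · intro i; exact (hasD_proj (-1) (ks 0) i p).congr_d (by norm_num)
    · intro i; exact (hasD_conj (-1) (ks 0) i p).congr_d (by norm_num)

lemma sum_cnt (n : ℕ) (F : ℕ → ℕ → ℂ) :
    ∑ ks : Fin n → Fin 2, F (cnt 0 n ks) (cnt 1 n ks) =
      ∑ ij ∈ Finset.HasAntidiagonal.antidiagonal n, (n.choose ij.1 : ℂ) * F ij.1 ij.2 := by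
  induction n generalizing F with
  | zero => simp [cnt]
  | succ n ih =>
    rw [Finset.sum_antidiagonal_choose_succ_mul, ← (Fin.consEquiv fun _ => Fin 2).sum_comp,
      Fintype.sum_prod_type, Fin.sum_univ_two]
    simp only [cnt, Fin.consEquiv, Equiv.coe_fn_mk, Fin.cons_zero, Fin.cons_succ]
    simp only [if_true, zero_ne_one, one_ne_zero, if_false, add_zero]
    rw [ih (fun a b => F (a + 1) b), ih (fun a b => F a (b + 1)), add_comm]
    congr 1
    refine Finset.sum_congr rfl fun ij hij => ?_
    rw [Finset.HasAntidiagonal.mem_antidiagonal] at hij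
    rw [Nat.choose_symm_of_eq_add (by omega : n = ij.1 + ij.2)]

noncomputable def NN (ζ : ℝ) (m₁ m₂ n₁ n₂ : ℕ) : ℂ :=
  ((Real.sqrt (m₁.factorial * m₂.factorial * n₁.factorial * n₂.factorial) : ℂ) *
      (Real.sqrt ζ : ℂ) ^ (m₁ + m₂ + n₁ + n₂))

lemma eFun_eq1 (ζ : ℝ) (m₁ m₂ n₁ n₂ : ℕ) :
    eFun ζ m₁ m₂ n₁ n₂ = FF ζ (fun i q => starRingEnd ℂ (q i)) (fun i q => q i)
      (NN ζ m₁ m₂ n₁ n₂)⁻¹ m₁ m₂ n₁ n₂ 0 0 := by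
  funext p
  simp only [eFun, FF, PP]
  rw [← NN, show -(p 0 * starRingEnd ℂ (p 0) + p 1 * starRingEnd ℂ (p 1)) / (ζ : ℂ) =
    (-(ζ : ℂ)⁻¹) * (starRingEnd ℂ (p 0) * p 0 + starRingEnd ℂ (p 1) * p 1) by ring]
  ring

lemma eFun_eq2 (ζ : ℝ) (m₁ m₂ n₁ n₂ : ℕ) :
    eFun ζ m₁ m₂ n₁ n₂ = FF ζ (fun i q => q i) (fun i q => starRingEnd ℂ (q i))
      (NN ζ m₁ m₂ n₁ n₂)⁻¹ n₁ n₂ m₁ m₂ 0 0 := by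
  funext p
  simp only [eFun, FF, PP]
  rw [← NN, show -(p 0 * starRingEnd ℂ (p 0) + p 1 * starRingEnd ℂ (p 1)) / (ζ : ℂ) =
    (-(ζ : ℂ)⁻¹) * (p 0 * starRingEnd ℂ (p 0) + p 1 * starRingEnd ℂ (p 1)) by ring]
  ring

lemma starTerm_eq (ζ : ℝ) (k₁ k₂ l₁ l₂ m₁ m₂ n₁ n₂ n : ℕ) (p : Fin 2 → ℂ) :
    starTerm ζ (eFun ζ k₁ k₂ l₁ l₂) (eFun ζ m₁ m₂ n₁ n₂) n p =
      ((NN ζ k₁ k₂ l₁ l₂)⁻¹ * (NN ζ m₁ m₂ n₁ n₂)⁻¹ * (p 0 ^ k₁ * p 1 ^ k₂ *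
        starRingEnd ℂ (p 0) ^ n₁ * starRingEnd ℂ (p 1) ^ n₂) *
        Complex.exp (-(p 0 * starRingEnd ℂ (p 0) + p 1 * starRingEnd ℂ (p 1)) / (ζ : ℂ)) ^ 2) *
      ∑ ij ∈ Finset.HasAntidiagonal.antidiagonal n, TT ζ (p 0) (starRingEnd ℂ (p 0)) l₁ m₁ ij.1 *
        TT ζ (p 1) (starRingEnd ℂ (p 1)) l₂ m₂ ij.2 := by
  rw [starTerm, eFun_eq1 ζ k₁, eFun_eq2 ζ m₁]
  simp only [dZbarIter_FF, dZIter_FF]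
  rw [sum_cnt n (fun a b => FF ζ (fun i q => starRingEnd ℂ (q i)) (fun i q => q i)
    (NN ζ k₁ k₂ l₁ l₂)⁻¹ k₁ k₂ l₁ l₂ a b p * FF ζ (fun i q => q i)
    (fun i q => starRingEnd ℂ (q i)) (NN ζ m₁ m₂ n₁ n₂)⁻¹ n₁ n₂ m₁ m₂ a b p),
    Finset.mul_sum, Finset.mul_sum]
  refine Finset.sum_congr rfl fun ij hij => ?_
  rw [Finset.HasAntidiagonal.mem_antidiagonal] at hij
  obtain ⟨a, b⟩ := ij
  simp only at hij
  subst hij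
  have h : ((a + b).factorial : ℂ) = (a + b).choose a * a.factorial * b.factorial := by
    have := Nat.add_choose_mul_factorial_mul_factorial a b
    rw [← this, Nat.choose_symm_add]; push_cast; rfl
  have hc : ((a + b).choose a : ℂ) ≠ 0 := by
    exact_mod_cast (Nat.choose_pos (Nat.le_add_right a b)).ne'
  have hr : (ζ : ℂ) ^ (a + b) / ((a + b).factorial : ℂ) * ((a + b).choose a : ℂ) =
      ((ζ : ℂ) ^ a / a.factorial) * ((ζ : ℂ) ^ b / b.factorial) := by
    rw [h]
    have ha : ((a.factorial : ℕ) : ℂ) ≠ 0 := by exact_mod_cast a.factorial_ne_zero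
    have hb : ((b.factorial : ℕ) : ℂ) ≠ 0 := by exact_mod_cast b.factorial_ne_zero
    field_simp
    try ring
  rw [← mul_assoc, hr]
  simp only [FF, TT]
  rw [show -(ζ : ℂ)⁻¹ * (starRingEnd ℂ (p 0) * p 0 + starRingEnd ℂ (p 1) * p 1) =
    -(p 0 * starRingEnd ℂ (p 0) + p 1 * starRingEnd ℂ (p 1)) / (ζ : ℂ) by ring,
    show -(ζ : ℂ)⁻¹ * (p 0 * starRingEnd ℂ (p 0) + p 1 * starRingEnd ℂ (p 1)) =
    -(p 0 * starRingEnd ℂ (p 0) + p 1 * starRingEnd ℂ (p 1)) / (ζ : ℂ) by ring]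
  simp only [← div_eq_mul_inv]
  ring

lemma NN_ne (ζ : ℝ) (hζ : 0 < ζ) (a b c d : ℕ) : NN ζ a b c d ≠ 0 := by
  unfold NN
  have h1 : 0 < Real.sqrt (a.factorial * b.factorial * c.factorial * d.factorial) := by
    positivity
  have h2 : 0 < Real.sqrt ζ := by positivity
  exact mul_ne_zero (by exact_mod_cast h1.ne') (pow_ne_zero _ (by exact_mod_cast h2.ne'))

lemma NN_mul (ζ : ℝ) (hζ : 0 < ζ) (k₁ k₂ l₁ l₂ n₁ n₂ : ℕ) :
    NN ζ k₁ k₂ l₁ l₂ * NN ζ l₁ l₂ n₁ n₂ =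
      (l₁.factorial * ζ ^ l₁) * (l₂.factorial * ζ ^ l₂) * NN ζ k₁ k₂ n₁ n₂ := by
  have hs : (Real.sqrt ζ : ℂ) ^ 2 = ζ := by exact_mod_cast Real.sq_sqrt hζ.le
  have h1 : Real.sqrt (k₁.factorial * k₂.factorial * l₁.factorial * l₂.factorial) *
      Real.sqrt (l₁.factorial * l₂.factorial * n₁.factorial * n₂.factorial) =
      l₁.factorial * l₂.factorial *
      Real.sqrt (k₁.factorial * k₂.factorial * n₁.factorial * n₂.factorial) := by
    rw [← Real.sqrt_mul (by positivity), show
      ((k₁.factorial * k₂.factorial * l₁.factorial * l₂.factorial) *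
        (l₁.factorial * l₂.factorial * n₁.factorial * n₂.factorial) : ℝ) =
      (l₁.factorial * l₂.factorial : ℝ) ^ 2 *
        (k₁.factorial * k₂.factorial * n₁.factorial * n₂.factorial) by ring,
      Real.sqrt_mul (by positivity), Real.sqrt_sq (by positivity)]
  have h1' := congrArg (fun r : ℝ => (r : ℂ)) h1
  push_cast at h1'
  unfold NN
  rw [mul_mul_mul_comm, h1']
  conv_rhs => rw [← hs]
  ring

lemma star_hasSum (ζ : ℝ) (hζ : 0 < ζ) (k₁ k₂ l₁ l₂ m₁ m₂ n₁ n₂ : ℕ) (p : Fin 2 → ℂ) :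
    HasSum (fun n : ℕ => starTerm ζ (eFun ζ k₁ k₂ l₁ l₂) (eFun ζ m₁ m₂ n₁ n₂) n p)
      ((if l₁ = m₁ then 1 else 0) * (if l₂ = m₂ then 1 else 0) * eFun ζ k₁ k₂ n₁ n₂ p) := by
  have H1 := TT_hasSum ζ hζ (p 0) (starRingEnd ℂ (p 0)) l₁ m₁
  have H2 := TT_hasSum ζ hζ (p 1) (starRingEnd ℂ (p 1)) l₂ m₂
  have S := (summable_norm_sum_mul_antidiagonal_of_summable_norm
    H1.summable.norm H2.summable.norm).of_norm.hasSum
  rw [← tsum_mul_tsum_eq_tsum_sum_antidiagonal_of_summable_norm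
    H1.summable.norm H2.summable.norm, H1.tsum_eq, H2.tsum_eq] at S
  simp only [starTerm_eq]
  refine Eq.subst (motive := fun t => HasSum _ t) ?_ (S.mul_left _)
  by_cases h1 : l₁ = m₁
  · by_cases h2 : l₂ = m₂
    · subst h1 h2
      simp only [if_true]
      have hN := NN_mul ζ hζ k₁ k₂ l₁ l₂ n₁ n₂
      have e1 := NN_ne ζ hζ k₁ k₂ l₁ l₂
      have e2 := NN_ne ζ hζ l₁ l₂ n₁ n₂
      have e3 := NN_ne ζ hζ k₁ k₂ n₁ n₂
      have hE : Complex.exp (-(p 0 * starRingEnd ℂ (p 0) + p 1 * starRingEnd ℂ (p 1)) / (ζ : ℂ)) *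
          (Complex.exp (p 0 * starRingEnd ℂ (p 0) / ζ) *
            Complex.exp (p 1 * starRingEnd ℂ (p 1) / ζ)) = 1 := by
        rw [← Complex.exp_add, ← Complex.exp_add, ← Complex.exp_zero]
        congr 1; ring
      simp only [eFun]
      rw [← NN]
      generalize Complex.exp (-(p 0 * starRingEnd ℂ (p 0) + p 1 * starRingEnd ℂ (p 1)) / (ζ : ℂ))
        = E at *
      generalize Complex.exp (p 0 * starRingEnd ℂ (p 0) / ζ) = E1 at *
      generalize Complex.exp (p 1 * starRingEnd ℂ (p 1) / ζ) = E2 at *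
      have hK : (NN ζ k₁ k₂ l₁ l₂)⁻¹ * (NN ζ l₁ l₂ n₁ n₂)⁻¹ *
          ((l₁.factorial * ζ ^ l₁) * (l₂.factorial * ζ ^ l₂)) = (NN ζ k₁ k₂ n₁ n₂)⁻¹ := by
        rw [← mul_inv, inv_mul_eq_div, div_eq_iff (mul_ne_zero e1 e2), hN]
        field_simp
      rw [div_eq_mul_inv, ← hK]
      linear_combination ((NN ζ k₁ k₂ l₁ l₂)⁻¹ * (NN ζ l₁ l₂ n₁ n₂)⁻¹ *
          ((l₁.factorial * ζ ^ l₁) * (l₂.factorial * ζ ^ l₂)) * (p 0 ^ k₁ * p 1 ^ k₂ *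
        starRingEnd ℂ (p 0) ^ n₁ * starRingEnd ℂ (p 1) ^ n₂) * E) * hE
    · simp [h2]
  · simp [h1]

/-- For `ζ > 0`, the Karabegov star-product series for
`e_{(k₁,k₂,l₁,l₂)} * e_{(m₁,m₂,n₁,n₂)}` converges at every point of `ℂ²` and
`e_{(k₁,k₂,l₁,l₂)} * e_{(m₁,m₂,n₁,n₂)} = δ_{l₁m₁} δ_{l₂m₂} e_{(k₁,k₂,n₁,n₂)}`. -/
theorem eFun_starProd (ζ : ℝ) (hζ : 0 < ζ) (k₁ k₂ l₁ l₂ m₁ m₂ n₁ n₂ : ℕ) :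
    (∀ p : Fin 2 → ℂ,
      Summable (fun n : ℕ => starTerm ζ (eFun ζ k₁ k₂ l₁ l₂) (eFun ζ m₁ m₂ n₁ n₂) n p)) ∧
    (∀ p : Fin 2 → ℂ,
      starProd ζ (eFun ζ k₁ k₂ l₁ l₂) (eFun ζ m₁ m₂ n₁ n₂) p =
        (if l₁ = m₁ then 1 else 0) * (if l₂ = m₂ then 1 else 0) * eFun ζ k₁ k₂ n₁ n₂ p) := by
  exact ⟨fun p => (star_hasSum ζ hζ k₁ k₂ l₁ l₂ m₁ m₂ n₁ n₂ p).summable,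
    fun p => (star_hasSum ζ hζ k₁ k₂ l₁ l₂ m₁ m₂ n₁ n₂ p).tsum_eq⟩

end Paper
end
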